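/- Let μ be the measure on the upper half-space ℝⁿ×(0,∞) with density χ_{0<y≤1} y^{−1} dx dy, and for a measurable A ⊆ ℝⁿ×(0,∞) define M(A) = sup over dyadic cubes Q ⊆ ℝⁿ of side length ≤ 1 of |Q|^{−1} μ(A ∩ (Q×(0,l(Q)))). Suppose A has the plumpness property: there exist δ, δ' ∈ (0,1/10) such that for every z ∈ A, |B_ρ(z,δ) ∩ A| ≥ δ'|B_ρ(z,δ)| (Lebesgue measure, B_ρ hyperbolic ball). If M(A) < ∞, then M(A_R) < ∞ for every R > 0, where A_R = {p : ρ(p,A) < R} is the hyperbolic R-neighbourhood of A. -/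

import Mathlib

/-!
The hyperbolic geometry enters only through two Euclidean comparisons: points at bounded hyperbolic
distance are `Near` each other (`near_of_hypDist`), and a small hyperbolic ball centred at height
`y` contains a cylinder of volume about `y ^ (n + 1)` (`volume_hypBall_ge`). With plumpness, every
point `p` of `A_R` of height `y` therefore has about `y ^ (n + 1)` of the volume of `A` near it.

Fix a dyadic cube `Q`. The part of the box over `Q` at height at least `l(Q) / K` has mass at most
`K |Q|`, whatever `A_R` is (`lintegral_top_le`). For the lower part, `χ_{A_R}(p)` is bounded by a
constant times `y ^ (-n-1)` times the volume of the points of `A` near `p`; Tonelli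
(`double_count`), together with the fact that the set of points near a given `q` has volume
`O(q.2 ^ (n + 1))`, bounds its mass by a multiple of the mass of the part of `A` near it. That part
lies in the boxes over the `3 ^ n` cubes of the generation of `Q` adjacent to `Q` (`mem_adjBoxes`),
where the Carleson condition on `A` applies.

The set `A` is not assumed measurable: Tonelli is applied to a measurable hull, which has the same
volume inside every measurable set.
-/

open MeasureTheory ENNReal

/-- The hyperbolic distance on the upper half-space `ℝⁿ × (0,∞)`. -/
noncomputable def hypDist {n : ℕ} (z w : EuclideanSpace ℝ (Fin n) × ℝ) : ℝ :=
  2 * Real.arsinh (Real.sqrt (dist z.1 w.1 ^ 2 + (z.2 - w.2) ^ 2) /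
    (2 * Real.sqrt (z.2 * w.2)))

/-- The hyperbolic ball of centre `z` and radius `r` in the upper half-space. -/
def hypBall {n : ℕ} (z : EuclideanSpace ℝ (Fin n) × ℝ) (r : ℝ) :
    Set (EuclideanSpace ℝ (Fin n) × ℝ) :=
  {w | 0 < w.2 ∧ hypDist z w < r}

/-- The hyperbolic `R`-neighbourhood of a set in the upper half-space. -/
def hypNbhd {n : ℕ} (A : Set (EuclideanSpace ℝ (Fin n) × ℝ)) (R : ℝ) :
    Set (EuclideanSpace ℝ (Fin n) × ℝ) :=
  {p | 0 < p.2 ∧ ∃ a ∈ A, hypDist p a < R}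

/-- The dyadic cube `{x : 2^j x − k ∈ [0,1]^n}` of generation `j ≥ 0`. -/
def dyadicCube (n : ℕ) (j : ℕ) (k : Fin n → ℤ) : Set (EuclideanSpace ℝ (Fin n)) :=
  {x | ∀ i, (k i : ℝ) ≤ 2 ^ j * x i ∧ 2 ^ j * x i ≤ k i + 1}

/-- The Carleson-type quantity
`M(A) = sup_{Q dyadic, l(Q) ≤ 1} |Q|⁻¹ ∫_Q ∫_0^{l(Q)} χ_A(x,y) y⁻¹ dy dx`. -/
noncomputable def carlesonM (n : ℕ) (A : Set (EuclideanSpace ℝ (Fin n) × ℝ)) : ℝ≥0∞ :=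
  ⨆ (j : ℕ) (k : Fin n → ℤ),
    (2 : ℝ≥0∞) ^ (j * n) *
      ∫⁻ z in A ∩ (dyadicCube n j k ×ˢ Set.Ioo (0 : ℝ) ((2 : ℝ) ^ (-(j : ℝ)))),
        ENNReal.ofReal (z.2⁻¹)

/-! ### Comparison of hyperbolic and Euclidean geometry -/

/-- `Near K p q`: the points `p`, `q` of the upper half-space are comparable with constant `K`,
i.e. their heights agree up to the factor `K` and their horizontal distance is at most `K` times
the height of `p`. This is a Euclidean substitute for being at bounded hyperbolic distance. -/
def Near {n : ℕ} (K : ℝ) (p q : EuclideanSpace ℝ (Fin n) × ℝ) : Prop :=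
  0 < p.2 ∧ 0 < q.2 ∧ dist p.1 q.1 ≤ K * p.2 ∧ q.2 ≤ K * p.2 ∧ p.2 ≤ K * q.2

lemma near_of_hypDist {n : ℕ} {p q : EuclideanSpace ℝ (Fin n) × ℝ} (hp : 0 < p.2)
    (hq : 0 < q.2) {r : ℝ} (h : hypDist p q < r) :
    Near (2 + 4 * Real.sinh (r / 2) ^ 2) p q := by
  have hpq : 0 < p.2 * q.2 := mul_pos hp hq
  have h1 : Real.sqrt (dist p.1 q.1 ^ 2 + (p.2 - q.2) ^ 2) / (2 * Real.sqrt (p.2 * q.2))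
      < Real.sinh (r / 2) := by
    rw [← Real.arsinh_lt_arsinh, Real.arsinh_sinh]
    unfold hypDist at h; linarith
  set s := Real.sinh (r / 2)
  have hsq : 0 < Real.sqrt (p.2 * q.2) := Real.sqrt_pos.2 hpq
  rw [div_lt_iff₀ (by positivity)] at h1
  have hD : 0 ≤ dist p.1 q.1 ^ 2 + (p.2 - q.2) ^ 2 := by positivity
  have h2 : dist p.1 q.1 ^ 2 + (p.2 - q.2) ^ 2 ≤ 4 * s ^ 2 * (p.2 * q.2) := by
    have := pow_le_pow_left₀ (Real.sqrt_nonneg _) h1.le 2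
    rw [Real.sq_sqrt hD, mul_pow, mul_pow, Real.sq_sqrt hpq.le] at this
    linarith
  have hq' : q.2 ≤ (2 + 4 * s ^ 2) * p.2 := by
    refine le_of_mul_le_mul_right ?_ hq
    nlinarith [sq_nonneg (dist p.1 q.1), sq_nonneg p.2]
  have hp' : p.2 ≤ (2 + 4 * s ^ 2) * q.2 := by
    refine le_of_mul_le_mul_right ?_ hp
    nlinarith [sq_nonneg (dist p.1 q.1), sq_nonneg q.2]
  refine ⟨hp, hq, ?_, hq', hp'⟩
  refine abs_le_of_sq_le_sq' ?_ (by positivity) |>.2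
  calc dist p.1 q.1 ^ 2 ≤ 4 * s ^ 2 * (p.2 * q.2) := by nlinarith [sq_nonneg (p.2 - q.2)]
    _ ≤ (2 + 4 * s ^ 2) * (p.2 * ((2 + 4 * s ^ 2) * p.2)) := by
        gcongr; linarith
    _ = _ := by ring

lemma Near.comp {n : ℕ} {K L : ℝ} {p a q : EuclideanSpace ℝ (Fin n) × ℝ} (hK : 1 ≤ K)
    (hL : 1 ≤ L) (h : Near K p a) (h' : Near L a q) : Near (K + K * L) p q := by
  obtain ⟨hp, ha, h1, h2, h3⟩ := h
  obtain ⟨-, hq, k1, k2, k3⟩ := h'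
  have e1 : L * a.2 ≤ L * (K * p.2) := by gcongr
  have e2 : K * a.2 ≤ K * (L * q.2) := by gcongr
  have e3 : 0 < K * p.2 := by positivity
  have e4 : 0 < K * q.2 := by positivity
  refine ⟨hp, hq, ?_, ?_, ?_⟩
  · linarith [dist_triangle p.1 a.1 q.1]
  · linarith
  · linarith

/-- Hyperbolic balls of small radius contain Euclidean cylinders of comparable size. -/
lemma cylinder_subset_hypBall {n : ℕ} {a : EuclideanSpace ℝ (Fin n) × ℝ} (ha : 0 < a.2)
    {δ : ℝ} (hδ : 0 < δ) (hδ1 : δ < 1) :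
    Metric.ball a.1 (δ / 2 * a.2) ×ˢ Metric.ball a.2 (δ / 2 * a.2) ⊆ hypBall a δ := by
  rintro q ⟨h1, h2⟩
  rw [Metric.mem_ball'] at h1 h2
  rw [Real.dist_eq, abs_lt] at h2
  have hq2 : a.2 / 2 < q.2 := by nlinarith
  have hq : 0 < q.2 := by linarith
  refine ⟨hq, ?_⟩
  have hpq : 0 < a.2 * q.2 := mul_pos ha hq
  have hsq : 0 < Real.sqrt (a.2 * q.2) := Real.sqrt_pos.2 hpq
  have key : Real.sqrt (dist a.1 q.1 ^ 2 + (a.2 - q.2) ^ 2) / (2 * Real.sqrt (a.2 * q.2))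
      < δ / 2 := by
    rw [div_lt_iff₀ (by positivity), Real.sqrt_lt' (by positivity)]
    rw [mul_pow, mul_pow, Real.sq_sqrt hpq.le]
    have e1 : dist a.1 q.1 ^ 2 < (δ / 2 * a.2) ^ 2 := by gcongr
    have e2 : (a.2 - q.2) ^ 2 < (δ / 2 * a.2) ^ 2 := sq_lt_sq' h2.1 h2.2
    have e3 : (δ / 2) ^ 2 * (a.2 * (a.2 / 2)) < (δ / 2) ^ 2 * (a.2 * q.2) := by gcongr
    linarith
  have : Real.arsinh (Real.sqrt (dist a.1 q.1 ^ 2 + (a.2 - q.2) ^ 2) /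
      (2 * Real.sqrt (a.2 * q.2))) < δ / 2 := by
    rw [← Real.arsinh_sinh (δ / 2), Real.arsinh_lt_arsinh]
    exact key.trans_le (Real.self_le_sinh_iff.2 (by positivity))
  unfold hypDist; linarith

lemma volume_hypBall_ge {n : ℕ} {a : EuclideanSpace ℝ (Fin n) × ℝ} (ha : 0 < a.2)
    {δ : ℝ} (hδ : 0 < δ) (hδ1 : δ < 1) :
    ENNReal.ofReal (δ * (δ / 2) ^ n) * volume (Metric.ball (0 : EuclideanSpace ℝ (Fin n)) 1) *
      ENNReal.ofReal (a.2 ^ (n + 1)) ≤ volume (hypBall a δ) := by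
  refine le_trans (le_of_eq ?_) (measure_mono (cylinder_subset_hypBall ha hδ hδ1))
  rw [Measure.volume_eq_prod, Measure.prod_prod,
    Measure.addHaar_ball_of_pos _ a.1 (by positivity : 0 < δ / 2 * a.2),
    Real.volume_ball, finrank_euclideanSpace_fin, mul_right_comm,
    mul_right_comm (ENNReal.ofReal ((δ / 2 * a.2) ^ n)),
    ← ENNReal.ofReal_mul (by positivity), ← ENNReal.ofReal_mul (by positivity)]
  congr 2
  rw [mul_pow]; ring

lemma volume_near_le {n : ℕ} {K : ℝ} (hK : 0 < K) {q : EuclideanSpace ℝ (Fin n) × ℝ}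
    (hq : 0 < q.2) :
    volume {p | Near K p q} ≤
      ENNReal.ofReal ((K ^ 2) ^ n * K) * volume (Metric.ball (0 : EuclideanSpace ℝ (Fin n)) 1) *
        ENNReal.ofReal (q.2 ^ (n + 1)) := by
  have hsub : {p | Near K p q} ⊆ Metric.closedBall q.1 (K ^ 2 * q.2) ×ˢ Set.Icc 0 (K * q.2) := by
    rintro p ⟨hp, -, h1, -, h3⟩
    refine ⟨?_, hp.le, h3⟩
    rw [Metric.mem_closedBall]
    calc dist p.1 q.1 ≤ K * p.2 := h1
      _ ≤ K * (K * q.2) := by gcongr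
      _ = _ := by ring
  refine (measure_mono hsub).trans (le_of_eq ?_)
  rw [Measure.volume_eq_prod, Measure.prod_prod,
    Measure.addHaar_closedBall _ _ (by positivity),
    Real.volume_Icc, finrank_euclideanSpace_fin, mul_right_comm,
    mul_right_comm (ENNReal.ofReal ((K ^ 2) ^ n * K)),
    ← ENNReal.ofReal_mul (by positivity), ← ENNReal.ofReal_mul (by positivity)]
  congr 2
  rw [mul_pow]; ring

lemma measurableSet_near {n : ℕ} (K : ℝ) :
    MeasurableSet {z : (EuclideanSpace ℝ (Fin n) × ℝ) × (EuclideanSpace ℝ (Fin n) × ℝ) |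
      Near K z.1 z.2} := by
  have e1 : MeasurableSet {z : (EuclideanSpace ℝ (Fin n) × ℝ) × (EuclideanSpace ℝ (Fin n) × ℝ) |
      0 < z.1.2} := measurableSet_lt (by fun_prop) (by fun_prop)
  have e2 : MeasurableSet {z : (EuclideanSpace ℝ (Fin n) × ℝ) × (EuclideanSpace ℝ (Fin n) × ℝ) |
      0 < z.2.2} := measurableSet_lt (by fun_prop) (by fun_prop)
  have e3 : MeasurableSet {z : (EuclideanSpace ℝ (Fin n) × ℝ) × (EuclideanSpace ℝ (Fin n) × ℝ) |
      dist z.1.1 z.2.1 ≤ K * z.1.2} := measurableSet_le (by fun_prop) (by fun_prop)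
  have e4 : MeasurableSet {z : (EuclideanSpace ℝ (Fin n) × ℝ) × (EuclideanSpace ℝ (Fin n) × ℝ) |
      z.2.2 ≤ K * z.1.2} := measurableSet_le (by fun_prop) (by fun_prop)
  have e5 : MeasurableSet {z : (EuclideanSpace ℝ (Fin n) × ℝ) × (EuclideanSpace ℝ (Fin n) × ℝ) |
      z.1.2 ≤ K * z.2.2} := measurableSet_le (by fun_prop) (by fun_prop)
  exact e1.inter (e2.inter (e3.inter (e4.inter e5)))

/-! ### Dyadic cubes and Carleson boxes -/

lemma dyadicCube_eq (n j : ℕ) (k : Fin n → ℤ) :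
    dyadicCube n j k = (WithLp.ofLp : EuclideanSpace ℝ (Fin n) → (Fin n → ℝ)) ⁻¹'
      (Set.Icc (fun i => (k i : ℝ) / 2 ^ j) (fun i => ((k i : ℝ) + 1) / 2 ^ j)) := by
  ext x
  simp only [dyadicCube, Set.mem_ofPred_eq, Set.mem_preimage, Set.mem_Icc, Pi.le_def, ← forall_and]
  refine forall_congr' fun i => ?_
  rw [div_le_iff₀ (by positivity), le_div_iff₀ (by positivity), mul_comm (x i)]

lemma measurableSet_dyadicCube (n j : ℕ) (k : Fin n → ℤ) : MeasurableSet (dyadicCube n j k) := by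
  rw [dyadicCube_eq]
  exact (PiLp.volume_preserving_ofLp (Fin n)).measurable measurableSet_Icc

lemma two_pow_mul_volume_dyadicCube (n j : ℕ) (k : Fin n → ℤ) :
    (2 : ℝ≥0∞) ^ (j * n) * volume (dyadicCube n j k) = 1 := by
  rw [dyadicCube_eq, (PiLp.volume_preserving_ofLp (Fin n)).measure_preimage
    measurableSet_Icc.nullMeasurableSet, Real.volume_Icc_pi]
  have : ∀ i, ((k i : ℝ) + 1) / 2 ^ j - (k i : ℝ) / 2 ^ j = (2 ^ j)⁻¹ := fun i => by
    field_simp; ring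
  simp only [this, Finset.prod_const, Finset.card_univ, Fintype.card_fin]
  rw [pow_mul, ← mul_pow, ENNReal.ofReal_inv_of_pos (by positivity),
    ENNReal.ofReal_pow (by norm_num), ENNReal.ofReal_ofNat,
    ENNReal.mul_inv_cancel (by positivity) (by finiteness), one_pow]

/-- The union of the `3 ^ n` Carleson boxes `Q' × (0, l(Q'))` over the cubes `Q'` of generation `j`
adjacent to the cube with index `k` (including that cube). -/
def adjBoxes (n j : ℕ) (k : Fin n → ℤ) : Set (EuclideanSpace ℝ (Fin n) × ℝ) :=
  ⋃ e : Fin n → Fin 3,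
    dyadicCube n j (fun i => k i + (e i : ℕ) - 1) ×ˢ Set.Ioo (0 : ℝ) ((2 : ℝ) ^ (-(j : ℝ)))

lemma measurableSet_adjBoxes (n j : ℕ) (k : Fin n → ℤ) : MeasurableSet (adjBoxes n j k) :=
  MeasurableSet.iUnion fun _ => (measurableSet_dyadicCube _ _ _).prod measurableSet_Ioo

/-- A point near a point lying sufficiently low above `Q` lies in a box adjacent to `Q`. -/
lemma mem_adjBoxes {n j : ℕ} {k : Fin n → ℤ} {K : ℝ} (hK : 0 < K)
    {p q : EuclideanSpace ℝ (Fin n) × ℝ}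
    (hp : p ∈ dyadicCube n j k ×ˢ Set.Ioo (0 : ℝ) ((2 : ℝ) ^ (-(j : ℝ)) / K))
    (h : Near K p q) : q ∈ adjBoxes n j k := by
  obtain ⟨hp1, -, hp2⟩ := hp
  obtain ⟨-, hq, h1, h2, -⟩ := h
  rw [lt_div_iff₀ hK] at hp2
  have hlt : dist p.1 q.1 < (2 : ℝ) ^ (-(j : ℝ)) := by linarith
  have hl : (2 : ℝ) ^ j * (2 : ℝ) ^ (-(j : ℝ)) = 1 := by
    rw [Real.rpow_neg (by norm_num), Real.rpow_natCast, mul_inv_cancel₀ (by positivity)]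
  have hco : ∀ i, ∃ e : Fin 3, ((k i + (e : ℕ) - 1 : ℤ) : ℝ) ≤ 2 ^ j * q.1 i ∧
      2 ^ j * q.1 i ≤ ((k i + (e : ℕ) - 1 : ℤ) : ℝ) + 1 := by
    intro i
    have hi : |p.1 i - q.1 i| < (2 : ℝ) ^ (-(j : ℝ)) := by
      refine lt_of_le_of_lt ?_ hlt
      rw [dist_eq_norm]
      exact PiLp.norm_apply_le (p.1 - q.1) i
    have hi' : |2 ^ j * p.1 i - 2 ^ j * q.1 i| < 1 := by
      rw [← mul_sub, abs_mul, abs_of_pos (by positivity : (0 : ℝ) < 2 ^ j), ← hl]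
      gcongr
    rw [abs_lt] at hi'
    have := hp1 i
    rcases le_total (2 ^ j * q.1 i) (k i) with c | c
    · exact ⟨0, by push_cast; constructor <;> norm_num <;> linarith⟩
    rcases le_total (2 ^ j * q.1 i) (k i + 1) with c' | c'
    · exact ⟨1, by push_cast; constructor <;> norm_num <;> linarith⟩
    · exact ⟨2, by push_cast; constructor <;> norm_num <;> linarith⟩
  choose e he using hco
  exact Set.mem_iUnion.2 ⟨e, fun i => he i, hq, by linarith⟩

lemma lintegral_adjBoxes_le {n : ℕ} (A : Set (EuclideanSpace ℝ (Fin n) × ℝ)) (j : ℕ)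
    (k : Fin n → ℤ) :
    (2 : ℝ≥0∞) ^ (j * n) * ∫⁻ z in A ∩ adjBoxes n j k, ENNReal.ofReal (z.2⁻¹) ≤
      3 ^ n * carlesonM n A := by
  unfold adjBoxes
  rw [Set.inter_iUnion]
  refine (mul_le_mul_right (lintegral_iUnion_le _ _) _).trans ?_
  rw [tsum_fintype, Finset.mul_sum]
  refine (Finset.sum_le_sum (g := fun _ => carlesonM n A) fun e _ => ?_).trans ?_
  · exact le_iSup₂ (f := fun (j : ℕ) (k : Fin n → ℤ) => (2 : ℝ≥0∞) ^ (j * n) *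
      ∫⁻ z in A ∩ (dyadicCube n j k ×ˢ Set.Ioo (0 : ℝ) ((2 : ℝ) ^ (-(j : ℝ)))),
        ENNReal.ofReal (z.2⁻¹)) j (fun i => k i + (e i : ℕ) - 1)
  · simp

/-- The part of a Carleson box at height at least `l(Q) / K` has mass at most `K |Q|`. -/
lemma lintegral_top_le {n j : ℕ} {k : Fin n → ℤ} {K : ℝ} (hK : 0 < K) :
    (2 : ℝ≥0∞) ^ (j * n) * ∫⁻ z in dyadicCube n j k ×ˢ
      Set.Ico ((2 : ℝ) ^ (-(j : ℝ)) / K) ((2 : ℝ) ^ (-(j : ℝ))), ENNReal.ofReal (z.2⁻¹) ≤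
      ENNReal.ofReal K := by
  set l := (2 : ℝ) ^ (-(j : ℝ)) with hl
  have hl0 : 0 < l := by positivity
  have : ∫⁻ z in dyadicCube n j k ×ˢ Set.Ico (l / K) l, ENNReal.ofReal (z.2⁻¹) ≤
      ENNReal.ofReal (K / l) * (volume (dyadicCube n j k) * ENNReal.ofReal l) := by
    calc _ ≤ ∫⁻ z in dyadicCube n j k ×ˢ Set.Ico (l / K) l, ENNReal.ofReal (K / l) := by
          refine setLIntegral_mono measurable_const fun z hz => ?_
          apply ENNReal.ofReal_le_ofReal
          rw [← inv_div l K]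
          exact inv_anti₀ (by positivity) hz.2.1
      _ ≤ _ := by
          rw [setLIntegral_const, Measure.volume_eq_prod, Measure.prod_prod, Real.volume_Ico]
          gcongr
          linarith [div_pos hl0 hK]
  calc _ ≤ (2 : ℝ≥0∞) ^ (j * n) *
        (ENNReal.ofReal (K / l) * (volume (dyadicCube n j k) * ENNReal.ofReal l)) := by gcongr
    _ = ((2 : ℝ≥0∞) ^ (j * n) * volume (dyadicCube n j k)) *
        (ENNReal.ofReal (K / l) * ENNReal.ofReal l) := by ring
    _ = _ := by
      rw [two_pow_mul_volume_dyadicCube, one_mul, ← ENNReal.ofReal_mul (by positivity),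
        div_mul_cancel₀ _ hl0.ne']

/-! ### Double counting and the dilation theorem -/

/-- The double counting step: if every point `p` of `P` has at least the volume
`c * p.2 ^ (n + 1)` of the measurable set `B` near it, then `c` times the `dx dy / y`-mass of
`P ∩ T` is at most a constant times the mass of `B ∩ U`, as soon as `U` contains all points near
`T`. The set `P` may be non-measurable. -/
lemma double_count {n : ℕ} {K : ℝ} (hK : 0 < K) {c : ℝ≥0∞}
    {P B T U : Set (EuclideanSpace ℝ (Fin n) × ℝ)} (hB : MeasurableSet B) (hT : MeasurableSet T)
    (hU : MeasurableSet U) (hP : ∀ p ∈ P, 0 < p.2)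
    (hc : ∀ p ∈ P, c * ENNReal.ofReal (p.2 ^ (n + 1)) ≤ volume ({q | Near K p q} ∩ B))
    (hTU : ∀ p ∈ T, ∀ q, Near K p q → q ∈ U) :
    c * ∫⁻ p in P ∩ T, ENNReal.ofReal (p.2⁻¹) ≤
      (ENNReal.ofReal (K ^ (n + 2)) * (ENNReal.ofReal ((K ^ 2) ^ n * K) *
        volume (Metric.ball (0 : EuclideanSpace ℝ (Fin n)) 1))) *
        ∫⁻ q in B ∩ U, ENNReal.ofReal (q.2⁻¹) := by
  classical
  set W : Set ((EuclideanSpace ℝ (Fin n) × ℝ) × (EuclideanSpace ℝ (Fin n) × ℝ)) :=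
    {z | Near K z.1 z.2} ∩ (T ×ˢ (B ∩ U)) with hWdef
  have hW : MeasurableSet W := (measurableSet_near K).inter (hT.prod (hB.inter hU))
  set g : EuclideanSpace ℝ (Fin n) × ℝ → ℝ≥0∞ :=
    fun q => ENNReal.ofReal ((K / q.2) ^ (n + 2)) with hg
  have hgm : Measurable g := by
    apply Measurable.ennreal_ofReal
    exact (measurable_const.div measurable_snd).pow_const _
  set F : (EuclideanSpace ℝ (Fin n) × ℝ) × (EuclideanSpace ℝ (Fin n) × ℝ) → ℝ≥0∞ :=
    W.indicator fun z => g z.2 with hF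
  have hFm : Measurable F := (hgm.comp measurable_snd).indicator hW
  have step1 : c * ∫⁻ p in P ∩ T, ENNReal.ofReal (p.2⁻¹) ≤ ∫⁻ p, ∫⁻ q, F (p, q) := by
    rw [← lintegral_const_mul _ (by fun_prop)]
    refine le_trans (setLIntegral_mono hFm.lintegral_prod_right' fun p hp => ?_)
      (setLIntegral_le_lintegral (P ∩ T) _)
    have hp0 := hP p hp.1
    have hN : MeasurableSet {q | Near K p q} := measurable_prodMk_left (measurableSet_near K)
    calc c * ENNReal.ofReal (p.2⁻¹)
        = ENNReal.ofReal ((p.2⁻¹) ^ (n + 2)) * (c * ENNReal.ofReal (p.2 ^ (n + 1))) := by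
          rw [mul_left_comm, ← ENNReal.ofReal_mul (by positivity)]
          congr 2
          rw [pow_succ, mul_right_comm, ← mul_pow, inv_mul_cancel₀ hp0.ne', one_pow, one_mul]
      _ ≤ ENNReal.ofReal ((p.2⁻¹) ^ (n + 2)) * volume ({q | Near K p q} ∩ B) := by
          gcongr; exact hc p hp.1
      _ = ∫⁻ q in {q | Near K p q} ∩ B, ENNReal.ofReal ((p.2⁻¹) ^ (n + 2)) := by
          rw [setLIntegral_const]
      _ ≤ ∫⁻ q in {q | Near K p q} ∩ B, F (p, q) := by
          refine setLIntegral_mono (hFm.comp measurable_prodMk_left) fun q hq => ?_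
          have hmem : (p, q) ∈ W := ⟨hq.1, hp.2, hq.2, hTU p hp.2 q hq.1⟩
          rw [hF, Set.indicator_of_mem hmem]
          obtain ⟨-, h0, -, h2, -⟩ := hq.1
          apply ENNReal.ofReal_le_ofReal
          gcongr
          rw [inv_eq_one_div, div_le_div_iff₀ hp0 h0]
          linarith
      _ ≤ _ := setLIntegral_le_lintegral _ _
  refine step1.trans ?_
  rw [lintegral_lintegral_swap (f := fun p q => F (p, q)) hFm.aemeasurable,
    ← lintegral_const_mul _ (by fun_prop), ← lintegral_indicator (hB.inter hU)]
  refine lintegral_mono fun q => ?_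
  by_cases hq : q ∈ B ∩ U ∧ 0 < q.2
  · obtain ⟨hqB, hq0⟩ := hq
    have hN : MeasurableSet {p | Near K p q} := measurable_prodMk_right (measurableSet_near K)
    rw [Set.indicator_of_mem hqB]
    calc ∫⁻ p, F (p, q) ≤ ∫⁻ p, {p | Near K p q}.indicator (fun _ => g q) p := by
          refine lintegral_mono fun p => ?_
          by_cases h : (p, q) ∈ W
          · rw [hF, Set.indicator_of_mem h, Set.indicator_of_mem (show p ∈ {p | Near K p q} from h.1)]
          · rw [hF, Set.indicator_of_notMem h]; exact zero_le
      _ = g q * volume {p | Near K p q} := lintegral_indicator_const hN _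
      _ ≤ g q * (ENNReal.ofReal ((K ^ 2) ^ n * K) *
            volume (Metric.ball (0 : EuclideanSpace ℝ (Fin n)) 1) *
              ENNReal.ofReal (q.2 ^ (n + 1))) := by gcongr; exact volume_near_le hK hq0
      _ = _ := by
          have : g q * ENNReal.ofReal (q.2 ^ (n + 1)) =
              ENNReal.ofReal (K ^ (n + 2)) * ENNReal.ofReal (q.2⁻¹) := by
            rw [hg, ← ENNReal.ofReal_mul (by positivity), ← ENNReal.ofReal_mul (by positivity)]
            congr 1
            rw [div_pow]
            field_simp
            ring
          rw [mul_left_comm, this]; ring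
  · have : ∀ p, F (p, q) = 0 := fun p => by
      rw [hF, Set.indicator_of_notMem]
      rintro ⟨h1, -, h2⟩
      exact hq ⟨h2, h1.2.1⟩
    simp [this]

/-- If `A ⊆ ℝⁿ×(0,∞)` is plump (each hyperbolic `δ`-ball centred on `A`
meets `A` in proportion at least `δ'` of its Lebesgue measure) and `M(A) < ∞`, then
`M(A_R) < ∞` for every hyperbolic `R`-neighbourhood `A_R` of `A`. -/
theorem carleson_of_hyperbolic_dilation (n : ℕ)
    (A : Set (EuclideanSpace ℝ (Fin n) × ℝ)) (hA : ∀ z ∈ A, 0 < z.2)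
    (δ δ' : ℝ) (hδ : δ ∈ Set.Ioo (0 : ℝ) (1 / 10)) (hδ' : δ' ∈ Set.Ioo (0 : ℝ) (1 / 10))
    (hplump : ∀ z ∈ A,
      ENNReal.ofReal δ' * volume (hypBall z δ) ≤ volume (hypBall z δ ∩ A))
    (hM : carlesonM n A < ⊤) :
    ∀ R > 0, carlesonM n (hypNbhd A R) < ⊤ := by
  intro R _
  obtain ⟨hδ0, hδ1⟩ := hδ
  have hδ'0 := hδ'.1
  set ω := volume (Metric.ball (0 : EuclideanSpace ℝ (Fin n)) 1) with hω
  have hω0 : ω ≠ 0 := (Metric.measure_ball_pos _ _ one_pos).ne'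
  have hωt : ω ≠ ⊤ := measure_ball_lt_top.ne
  set K₁ := 2 + 4 * Real.sinh (R / 2) ^ 2 with hK₁
  set K₂ := 2 + 4 * Real.sinh (δ / 2) ^ 2 with hK₂
  have h1 : 1 ≤ K₁ := by nlinarith [sq_nonneg (Real.sinh (R / 2))]
  have h2 : 1 ≤ K₂ := by nlinarith [sq_nonneg (Real.sinh (δ / 2))]
  set K := K₁ + K₁ * K₂ with hKdef
  have hK : 0 < K := by positivity
  -- `A` need not be measurable; it is replaced by a measurable hull.
  set B := toMeasurable volume A with hBdef
  have hB : MeasurableSet B := measurableSet_toMeasurable _ _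
  set c : ℝ≥0∞ := ENNReal.ofReal δ' * (ENNReal.ofReal (δ * (δ / 2) ^ n) * ω *
    ENNReal.ofReal ((K₁⁻¹) ^ (n + 1))) with hcdef
  have hc0 : c ≠ 0 := by
    have e1 : ENNReal.ofReal δ' ≠ 0 := (ENNReal.ofReal_pos.2 hδ'0).ne'
    have e2 : ENNReal.ofReal (δ * (δ / 2) ^ n) ≠ 0 := (ENNReal.ofReal_pos.2 (by positivity)).ne'
    have e3 : ENNReal.ofReal ((K₁⁻¹) ^ (n + 1)) ≠ 0 := (ENNReal.ofReal_pos.2 (by positivity)).ne'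
    exact mul_ne_zero e1 (mul_ne_zero (mul_ne_zero e2 hω0) e3)
  have hct : c ≠ ⊤ := by finiteness
  have hlow : ∀ p ∈ hypNbhd A R,
      c * ENNReal.ofReal (p.2 ^ (n + 1)) ≤ volume ({q | Near K p q} ∩ B) := by
    rintro p ⟨hp, a, ha, hpa⟩
    have ha0 := hA a ha
    have hnear : Near K₁ p a := near_of_hypDist hp ha0 hpa
    calc c * ENNReal.ofReal (p.2 ^ (n + 1))
        = ENNReal.ofReal δ' * (ENNReal.ofReal (δ * (δ / 2) ^ n) * ω *
            ENNReal.ofReal ((K₁⁻¹ * p.2) ^ (n + 1))) := by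
          rw [hcdef, mul_pow, ENNReal.ofReal_mul (by positivity : 0 ≤ (K₁⁻¹) ^ (n + 1))]; ring
      _ ≤ ENNReal.ofReal δ' * (ENNReal.ofReal (δ * (δ / 2) ^ n) * ω *
            ENNReal.ofReal (a.2 ^ (n + 1))) := by
          gcongr
          rw [inv_mul_le_iff₀ (by positivity)]
          exact hnear.2.2.2.2
      _ ≤ ENNReal.ofReal δ' * volume (hypBall a δ) := by
          gcongr; exact volume_hypBall_ge ha0 hδ0 (by linarith)
      _ ≤ volume (hypBall a δ ∩ A) := hplump a ha
      _ ≤ _ := by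
          refine measure_mono (Set.inter_subset_inter (fun q hq => ?_) (subset_toMeasurable _ _))
          exact hnear.comp h1 h2 (near_of_hypDist ha0 hq.1 hq.2)
  set D : ℝ≥0∞ := ENNReal.ofReal (K ^ (n + 2)) * (ENNReal.ofReal ((K ^ 2) ^ n * K) * ω) with hD
  have hDt : D ≠ ⊤ := by finiteness
  have hfin : c⁻¹ * (D * (3 ^ n * carlesonM n A)) + ENNReal.ofReal K < ⊤ := by
    have := ENNReal.inv_ne_top.2 hc0
    have := hM.ne
    finiteness
  refine lt_of_le_of_lt (iSup₂_le fun j k => ?_) hfin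
  set l := (2 : ℝ) ^ (-(j : ℝ)) with hl
  set T := dyadicCube n j k ×ˢ Set.Ioo (0 : ℝ) (l / K) with hT
  have hsub : hypNbhd A R ∩ (dyadicCube n j k ×ˢ Set.Ioo (0 : ℝ) l) ⊆
      (hypNbhd A R ∩ T) ∪ dyadicCube n j k ×ˢ Set.Ico (l / K) l := by
    rintro z ⟨hz, hz1, hz2, hz3⟩
    rcases lt_or_ge z.2 (l / K) with h | h
    · exact Or.inl ⟨hz, hz1, hz2, h⟩
    · exact Or.inr ⟨hz1, h, hz3⟩
  have hbot := double_count (c := c) hK hB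
    ((measurableSet_dyadicCube n j k).prod measurableSet_Ioo)
    (measurableSet_adjBoxes n j k) (fun p hp => hp.1) hlow
    (fun p hp q hpq => mem_adjBoxes (n := n) (j := j) (k := k) hK hp hpq)
  have hBA : ∫⁻ q in B ∩ adjBoxes n j k, ENNReal.ofReal (q.2⁻¹) =
      ∫⁻ q in A ∩ adjBoxes n j k, ENNReal.ofReal (q.2⁻¹) := by
    have hU := measurableSet_adjBoxes n j k
    rw [Set.inter_comm B, Set.inter_comm A, ← Measure.restrict_restrict hU,
      ← Measure.restrict_restrict hU, Measure.restrict_toMeasurable_of_sFinite]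
  rw [hBA] at hbot
  calc _ ≤ (2 : ℝ≥0∞) ^ (j * n) * ((∫⁻ z in hypNbhd A R ∩ T, ENNReal.ofReal (z.2⁻¹)) +
        ∫⁻ z in dyadicCube n j k ×ˢ Set.Ico (l / K) l, ENNReal.ofReal (z.2⁻¹)) := by
        gcongr
        exact (lintegral_mono_set hsub).trans (lintegral_union_le _ _ _)
    _ ≤ _ := by
        rw [mul_add]
        refine add_le_add ?_ (lintegral_top_le hK)
        rw [← ENNReal.mul_le_iff_le_inv hc0 hct]
        calc _ = (2 : ℝ≥0∞) ^ (j * n) *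
              (c * ∫⁻ z in hypNbhd A R ∩ T, ENNReal.ofReal (z.2⁻¹)) := by ring
          _ ≤ (2 : ℝ≥0∞) ^ (j * n) *
              (D * ∫⁻ q in A ∩ adjBoxes n j k, ENNReal.ofReal (q.2⁻¹)) := by gcongr
          _ = D * ((2 : ℝ≥0∞) ^ (j * n) *
              ∫⁻ q in A ∩ adjBoxes n j k, ENNReal.ofReal (q.2⁻¹)) := by ring
          _ ≤ D * (3 ^ n * carlesonM n A) := mul_le_mul_right (lintegral_adjBoxes_le A j k) D
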